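/- (Bezout's theorem for weighted homogeneous complete intersections.) Let N ≥ 1, let (v_1,…,v_N) be positive integer weights, and let p_1,…,p_N ∈ ℂ[y_1,…,y_N] be polynomials such that each p_i is weighted homogeneous of positive degree D_i with respect to (v_1,…,v_N). If the quotient ring ℂ[y_1,…,y_N]/(p_1,…,p_N) is finite-dimensional as a ℂ-vector space, then v_1⋯v_N · dim_ℂ (ℂ[y_1,…,y_N]/(p_1,…,p_N)) = D_1⋯D_N. -/

import Mathlib

open MvPolynomial

/-
At the origin the polynomial ring is Cohen–Macaulay: the variables form a regular sequence, so every
system of parameters of the localization is regular, and `p₁, …, p_N` is one because its quotient is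
finite-dimensional. Regularity descends to the polynomial ring, since a polynomial invertible at the
origin has a unit as its degree zero component and hence is a nonzerodivisor modulo any homogeneous
ideal. Dividing by a regular element of degree `D` multiplies the Hilbert series by `1 - t ^ D`, so
the Hilbert polynomial `Q` of the quotient satisfies `Q ∏ (1 - t ^ vᵢ) = ∏ (1 - t ^ Dᵢ)`; cancel
`(1 - t) ^ N` and evaluate at `t = 1`.
-/

section SystemsOfParameters

open IsLocalRing Module RingTheory.Sequence

variable {R : Type*} [CommRing R] {M : Type*} [AddCommGroup M] [Module R M]

lemma eq_closedPoint_of_mem_support [IsLocalRing R] (hM : supportDim R M ≤ 0)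
    {P : PrimeSpectrum R} (hP : P ∈ Module.support R M) : P = closedPoint R := by
  have : Nontrivial M := nonempty_support_iff.1 ⟨P, hP⟩
  have hmax := Order.krullDim_nonpos_iff_forall_isMax.1 hM ⟨P, hP⟩
  exact congrArg Subtype.val (hmax.eq_of_le (b := ⟨closedPoint R, closedPoint_mem_support R M⟩)
    (le_maximalIdeal P.2.ne_top))

variable [Module.Finite R M]

lemma supportDim_quotSMulTop_comm (a b : R) :
    supportDim R (QuotSMulTop a (QuotSMulTop b M)) =
      supportDim R (QuotSMulTop b (QuotSMulTop a M)) := by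
  unfold supportDim
  rw [support_quotSMulTop, support_quotSMulTop, support_quotSMulTop, support_quotSMulTop,
    Set.inter_right_comm]

variable [IsLocalRing R]

lemma isSMulRegular_of_supportDim_quotSMulTop_le_zero {a x : R} (hx : x ∈ maximalIdeal R)
    (hreg : IsSMulRegular M x) (ha : supportDim R (QuotSMulTop a M) ≤ 0) :
    IsSMulRegular M a := by
  have hrad : x ∈ (annihilator R M ⊔ Ideal.span {a}).radical := by
    rw [Ideal.radical_eq_sInf, Submodule.mem_sInf]
    rintro P ⟨hP, hprime⟩
    have hsupp : (⟨P, hprime⟩ : PrimeSpectrum R) ∈ Module.support R (QuotSMulTop a M) := by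
      rw [support_quotSMulTop, support_eq_zeroLocus, ← PrimeSpectrum.zeroLocus_span {a},
        ← PrimeSpectrum.zeroLocus_sup]
      exact hP
    have hPm : P = maximalIdeal R :=
      congrArg PrimeSpectrum.asIdeal (eq_closedPoint_of_mem_support ha hsupp)
    exact hPm ▸ hx
  obtain ⟨k, hk⟩ := hrad
  obtain ⟨r, hr, y, hy, hsum⟩ := Submodule.mem_sup.1 hk
  obtain ⟨w, rfl⟩ := Ideal.mem_span_singleton'.1 hy
  refine isSMulRegular_iff_right_eq_zero_of_smul.2 fun u hu ↦ ?_
  refine (hreg.pow k).right_eq_zero_of_smul ?_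
  rw [← hsum, add_smul, mem_annihilator.1 hr, mul_smul, hu, smul_zero, add_zero]

variable [IsNoetherianRing R]

lemma supportDim_le_supportDim_quotient_ofList_add_length {rs : List R}
    (hrs : ∀ r ∈ rs, r ∈ maximalIdeal R) :
    supportDim R M ≤
      supportDim R (M ⧸ (Ideal.ofList rs • ⊤ : Submodule R M)) + rs.length := by
  induction rs generalizing M with
  | nil =>
    have hbot : (Ideal.ofList ([] : List R) • ⊤ : Submodule R M) = ⊥ := by simp
    simpa only [List.length_nil, Nat.cast_zero, add_zero] using
      (supportDim_eq_of_equiv (Submodule.quotEquivOfEqBot _ hbot)).ge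
  | cons r rs ih =>
    obtain ⟨hr, hrs⟩ := List.forall_mem_cons.1 hrs
    calc supportDim R M ≤ supportDim R (QuotSMulTop r M) + 1 :=
          supportDim_le_supportDim_quotSMulTop_succ hr
      _ ≤ supportDim R (QuotSMulTop r M ⧸
            (Ideal.ofList rs • ⊤ : Submodule R (QuotSMulTop r M))) + rs.length + 1 := by
          gcongr
          exact ih hrs
      _ = _ := by
          rw [supportDim_eq_of_equiv
            (Submodule.quotOfListConsSMulTopEquivQuotSMulTopInner M r rs), List.length_cons,
            Nat.cast_succ, add_assoc]

lemma supportDim_quotSMulTop_le_of_notMem_minimalPrimes {n : ℕ} {b : R}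
    (hM : supportDim R M ≤ n + 1)
    (hb : ∀ P ∈ (annihilator R M).minimalPrimes, P ≠ maximalIdeal R → b ∉ P) :
    supportDim R (QuotSMulTop b M) ≤ n := by
  by_cases hm : maximalIdeal R ∈ (annihilator R M).minimalPrimes
  · have := quotient_artinian_of_mem_minimalPrimes_of_isLocalRing _ hm
    calc supportDim R (QuotSMulTop b M) ≤ supportDim R M :=
          supportDim_le_of_surjective _ (Submodule.mkQ_surjective _)
      _ = ringKrullDim (R ⧸ annihilator R M) := supportDim_eq_ringKrullDim_quotient_annihilator ..
      _ ≤ 0 := Ring.krullDimLE_iff.1 inferInstance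
      _ ≤ n := by exact_mod_cast n.zero_le
  · have hdrop := supportDim_quotSMulTop_succ_le_of_notMem_minimalPrimes (M := M)
      fun P hP ↦ hb P hP fun h ↦ hm (h ▸ hP)
    exact ENat.WithBot.add_le_add_one_right_iff.1 (hdrop.trans hM)

lemma exists_mem_maximalIdeal_supportDim_quotSMulTop_le {M' : Type*} [AddCommGroup M']
    [Module R M'] [Module.Finite R M'] {n : ℕ}
    (hM : supportDim R M ≤ n + 1) (hM' : supportDim R M' ≤ n + 1) :
    ∃ b ∈ maximalIdeal R,
      supportDim R (QuotSMulTop b M) ≤ n ∧ supportDim R (QuotSMulTop b M') ≤ n := by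
  set s : Set (Ideal R) :=
    ((annihilator R M).minimalPrimes ∪ (annihilator R M').minimalPrimes) \ {maximalIdeal R}
  have hs : s.Finite :=
    ((Ideal.finite_minimalPrimes_of_isNoetherianRing R _).union
      (Ideal.finite_minimalPrimes_of_isNoetherianRing R _)).sdiff
  have hprime : ∀ P ∈ s, P.IsPrime := fun P hP ↦ hP.1.elim (·.1.1) (·.1.1)
  have havoid : ¬ (maximalIdeal R : Set R) ⊆ ⋃ P ∈ s, (P : Set R) := fun h ↦ by
    obtain ⟨P, hP, hle⟩ := (Ideal.subset_union_prime_finite hs (f := id) ⊤ ⊤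
      fun P hP _ _ ↦ hprime P hP).1 h
    exact hP.2 ((le_maximalIdeal (hprime P hP).ne_top).antisymm hle)
  obtain ⟨b, hb, hbs⟩ := Set.not_subset.1 havoid
  simp only [Set.mem_iUnion, not_exists] at hbs
  exact ⟨b, hb,
    supportDim_quotSMulTop_le_of_notMem_minimalPrimes hM fun P hP hne ↦ hbs P ⟨.inl hP, hne⟩,
    supportDim_quotSMulTop_le_of_notMem_minimalPrimes hM' fun P hP hne ↦ hbs P ⟨.inr hP, hne⟩⟩

theorem exists_isWeaklyRegular_cons {n : ℕ} {rs : List R} {a : R} (hlen : rs.length = n + 1)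
    (hrs : ∀ r ∈ rs, r ∈ maximalIdeal R) (hreg : IsWeaklyRegular M rs)
    (ha : a ∈ maximalIdeal R) (hdim : supportDim R (QuotSMulTop a M) ≤ n) :
    ∃ rs' : List R, rs'.length = n ∧ (∀ r ∈ rs', r ∈ maximalIdeal R) ∧
      IsWeaklyRegular M (a :: rs') := by
  induction n generalizing M rs a with
  | zero =>
    obtain ⟨x, rfl⟩ := List.length_eq_one_iff.1 hlen
    rw [isWeaklyRegular_singleton_iff] at hreg
    exact ⟨[], rfl, List.forall_mem_nil _, (isWeaklyRegular_singleton_iff M a).2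
      (isSMulRegular_of_supportDim_quotSMulTop_le_zero (hrs x (List.mem_singleton_self x)) hreg
        hdim)⟩
  | succ n ih =>
    obtain ⟨x, xs, rfl⟩ := List.exists_cons_of_length_eq_add_one hlen
    obtain ⟨hx, hxs⟩ := List.forall_mem_cons.1 hrs
    obtain ⟨hxreg, hxsreg⟩ := (isWeaklyRegular_cons_iff M x xs).1 hreg
    have hdimx : supportDim R (QuotSMulTop x M) ≤ n + 1 := by
      refine ENat.WithBot.add_le_add_one_right_iff.1 ?_
      rw [supportDim_quotSMulTop_succ_eq_supportDim hxreg hx]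
      exact (supportDim_le_supportDim_quotSMulTop_succ ha).trans (by gcongr; exact mod_cast hdim)
    -- Exchange `x` for a parameter `b` common to `M/xM` and `M/aM`, then `a` can be put after `b`.
    obtain ⟨b, hb, hbx, hba⟩ :=
      exists_mem_maximalIdeal_supportDim_quotSMulTop_le hdimx (mod_cast hdim)
    obtain ⟨ys, hylen, hys, hyreg⟩ := ih (Nat.succ_injective hlen) hxs hxsreg hb hbx
    have hbxys : IsWeaklyRegular M (b :: x :: ys) :=
      isWeaklyRegular_of_perm_of_subset_maximalIdeal
        ((isWeaklyRegular_cons_iff M x _).2 ⟨hxreg, hyreg⟩) (.swap b x ys)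
        (List.forall_mem_cons.2 ⟨hx, List.forall_mem_cons.2 ⟨hb, hys⟩⟩)
    obtain ⟨hbreg, hxysreg⟩ := (isWeaklyRegular_cons_iff M b _).1 hbxys
    obtain ⟨zs, hzlen, hzs, hzreg⟩ := ih (rs := x :: ys) (by simp [hylen])
      (List.forall_mem_cons.2 ⟨hx, hys⟩) hxysreg ha
      ((supportDim_quotSMulTop_comm (M := M) a b).trans_le hba)
    exact ⟨b :: zs, by simp [hzlen], List.forall_mem_cons.2 ⟨hb, hzs⟩,
      isWeaklyRegular_of_perm_of_subset_maximalIdeal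
        ((isWeaklyRegular_cons_iff M b _).2 ⟨hbreg, hzreg⟩) (.swap a b zs)
        (List.forall_mem_cons.2 ⟨hb, List.forall_mem_cons.2 ⟨ha, hzs⟩⟩)⟩

theorem isWeaklyRegular_of_supportDim_quotient_le_zero {rs as : List R}
    (hlen : rs.length = as.length) (hrs : ∀ r ∈ rs, r ∈ maximalIdeal R)
    (hreg : IsWeaklyRegular M rs) (has : ∀ a ∈ as, a ∈ maximalIdeal R)
    (hdim : supportDim R (M ⧸ (Ideal.ofList as • ⊤ : Submodule R M)) ≤ 0) :
    IsWeaklyRegular M as := by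
  induction as generalizing M rs with
  | nil => exact .nil R M
  | cons a as ih =>
    obtain ⟨ha, has⟩ := List.forall_mem_cons.1 has
    rw [supportDim_eq_of_equiv (Submodule.quotOfListConsSMulTopEquivQuotSMulTopInner M a as)]
      at hdim
    have hdima : supportDim R (QuotSMulTop a M) ≤ as.length :=
      calc _ ≤ _ := supportDim_le_supportDim_quotient_ofList_add_length has
        _ ≤ 0 + (as.length : WithBot ℕ∞) := by gcongr
        _ = as.length := zero_add _
    obtain ⟨rs', hlen', hrs', hreg'⟩ := exists_isWeaklyRegular_cons hlen hrs hreg ha hdima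
    obtain ⟨hareg, hreg'⟩ := (isWeaklyRegular_cons_iff M a rs').1 hreg'
    exact (isWeaklyRegular_cons_iff M a as).2 ⟨hareg, ih hlen' hrs' hreg' has hdim⟩

end SystemsOfParameters

section GradedRings

open DirectSum IsLocalRing Module RingTheory.Sequence

variable {A : Type*} [CommRing A]

lemma isWeaklyRegular_self_iff {l : List A} :
    IsWeaklyRegular A l ↔ ∀ (i : ℕ) (hi : i < l.length) (u : A),
      l[i] * u ∈ Ideal.ofList (l.take i) → u ∈ Ideal.ofList (l.take i) := by
  simp only [isWeaklyRegular_iff, isSMulRegular_quotient_iff_mem_of_smul_mem, smul_eq_mul,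
    Ideal.mul_top]

lemma supportDim_quotient_map_algebraMap_le_zero (M : Submonoid A) (S : Type*) [CommRing S]
    [Algebra A S] [IsLocalization M S] (J : Ideal A) [IsArtinianRing (A ⧸ J)] :
    supportDim S (S ⧸ J.map (algebraMap A S)) ≤ 0 := by
  have := IsArtinianRing.localization_artinian (Algebra.algebraMapSubmonoid (A ⧸ J) M)
    (S ⧸ J.map (algebraMap A S))
  rw [supportDim_quotient_eq_ringKrullDim]
  exact Ring.krullDimLE_iff.1 inferInstance

variable {σ : Type*} [SetLike σ A] [AddSubmonoidClass σ A] {𝒜 : ℕ → σ} [GradedRing 𝒜]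

lemma mem_of_mul_mem_of_isUnit_decompose_zero {I : Ideal A} (hI : I.IsHomogeneous 𝒜) {s u : A}
    (hs : IsUnit (decompose 𝒜 s 0 : A)) (h : s * u ∈ I) : u ∈ I := by
  rw [hI.mem_iff]
  intro d
  induction d using Nat.strong_induction_on with
  | _ d ih =>
    have hd := hI d h
    rw [decompose_mul, coe_mul_apply_eq_sum_antidiagonal,
      Finset.Nat.sum_antidiagonal_eq_sum_range_succ_mk, Finset.sum_range_succ'] at hd
    refine (I.unit_mul_mem_iff_mem hs).1 ((I.add_mem_iff_right ?_).1 hd)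
    exact I.sum_mem fun i _ ↦ I.mul_mem_left _ (ih _ (by grind))

variable (𝒜)

theorem isWeaklyRegular_of_isWeaklyRegular_atPrime {P : Ideal A} [P.IsPrime]
    (hP : ∀ s ∉ P, IsUnit (decompose 𝒜 s 0 : A)) (S : Type*) [CommRing S] [Algebra A S]
    [IsLocalization.AtPrime S P] {l : List A} (hl : ∀ a ∈ l, SetLike.IsHomogeneousElem 𝒜 a)
    (hreg : IsWeaklyRegular S (l.map (algebraMap A S))) : IsWeaklyRegular A l := by
  rw [isWeaklyRegular_self_iff] at hreg ⊢
  intro i hi u hu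
  have hu' := hreg i (by simpa using hi) (algebraMap A S u) (by
    rw [List.getElem_map, ← map_mul, ← List.map_take, ← Ideal.map_ofList]
    exact Ideal.mem_map_of_mem _ hu)
  rw [← List.map_take, ← Ideal.map_ofList,
    IsLocalization.algebraMap_mem_map_algebraMap_iff P.primeCompl] at hu'
  obtain ⟨s, hs, hsu⟩ := hu'
  exact mem_of_mul_mem_of_isUnit_decompose_zero
    (Ideal.homogeneous_span 𝒜 _ fun a ha ↦ hl a (List.mem_of_mem_take ha)) (hP s hs) hsu

theorem isWeaklyRegular_of_isArtinianRing_quotient [IsNoetherianRing A] {P : Ideal A} [P.IsPrime]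
    (hP : ∀ s ∉ P, IsUnit (decompose 𝒜 s 0 : A)) {rs as : List A} (hlen : rs.length = as.length)
    (hrs : ∀ r ∈ rs, r ∈ P) (hreg : IsWeaklyRegular A rs) (has : ∀ a ∈ as, a ∈ P)
    (hhom : ∀ a ∈ as, SetLike.IsHomogeneousElem 𝒜 a) [IsArtinianRing (A ⧸ Ideal.ofList as)] :
    IsWeaklyRegular A as := by
  let S := Localization.AtPrime P
  have : IsNoetherianRing S := IsLocalization.isNoetherianRing P.primeCompl S inferInstance
  have hmem {l : List A} (hl : ∀ a ∈ l, a ∈ P) :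
      ∀ b ∈ l.map (algebraMap A S), b ∈ maximalIdeal S :=
    List.forall_mem_map.2 fun a ha ↦
      (IsLocalization.AtPrime.to_map_mem_maximal_iff S P a).2 (hl a ha)
  refine isWeaklyRegular_of_isWeaklyRegular_atPrime 𝒜 hP S hhom ?_
  refine isWeaklyRegular_of_supportDim_quotient_le_zero (by simpa using hlen) (hmem hrs)
    (hreg.of_isLocalization S P.primeCompl) (hmem has) ?_
  rw [← Ideal.map_ofList, smul_eq_mul, Ideal.mul_top]
  exact supportDim_quotient_map_algebraMap_le_zero P.primeCompl S _

end GradedRings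

section HilbertSeries

open DirectSum Module RingTheory.Sequence
open scoped PowerSeries

section LinearAlgebra

variable {K V ι : Type*} [DivisionRing K] [AddCommGroup V] [Module K V]

lemma finrank_biSup_of_iSupIndep [FiniteDimensional K V] {W : ι → Submodule K V}
    (hW : iSupIndep W) (s : Finset ι) :
    finrank K (⨆ i ∈ s, W i : Submodule K V) = ∑ i ∈ s, finrank K (W i) := by
  classical
  induction s using Finset.induction_on with
  | empty => simp
  | insert a s ha ih =>
    have hdisj : Disjoint (W a) (⨆ i ∈ s, W i) :=
      (hW a).mono_right (biSup_mono fun i hi ↦ ne_of_mem_of_not_mem hi ha)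
    have hsum := Submodule.finrank_sup_add_finrank_inf_eq (W a) (⨆ i ∈ s, W i)
    rw [hdisj.eq_bot, finrank_bot, add_zero] at hsum
    rw [Finset.iSup_insert, hsum, Finset.sum_insert ha, ih]

lemma finrank_map_add_finrank_inf_ker {V' : Type*} [AddCommGroup V'] [Module K V']
    (f : V →ₗ[K] V') (W : Submodule K V) [FiniteDimensional K W] :
    finrank K (W.map f) + finrank K (W ⊓ f.ker : Submodule K V) = finrank K W := by
  rw [← LinearMap.finrank_range_add_finrank_ker (f.domRestrict W), LinearMap.range_domRestrict,
    LinearMap.ker_domRestrict, ← Submodule.finrank_map_subtype_eq, Submodule.map_comap_subtype]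

end LinearAlgebra

lemma ofList_map_univ_toList {A ι : Type*} [CommSemiring A] [Fintype ι] (p : ι → A) :
    Ideal.ofList ((Finset.univ : Finset ι).toList.map p) = Ideal.span (Set.range p) := by
  unfold Ideal.ofList
  congr 1
  ext
  simp

lemma eval_one_mul_prod_of_mul_prod_one_sub_X_pow {R ι : Type*} [CommRing R] [IsDomain R]
    {s : Finset ι} {P Q : Polynomial R} {a b : ι → ℕ}
    (h : P * ∏ i ∈ s, (1 - .X ^ a i) = Q * ∏ i ∈ s, (1 - .X ^ b i)) :
    P.eval 1 * ∏ i ∈ s, (a i : R) = Q.eval 1 * ∏ i ∈ s, (b i : R) := by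
  have hprod (c : ι → ℕ) : ∏ i ∈ s, (1 - .X ^ c i : Polynomial R) =
      (1 - .X) ^ s.card * ∏ i ∈ s, ∑ j ∈ Finset.range (c i), .X ^ j := by
    rw [← Finset.prod_const, ← Finset.prod_mul_distrib]
    exact Finset.prod_congr rfl fun i _ ↦ (mul_neg_geom_sum _ (c i)).symm
  have hX : (1 - .X : Polynomial R) ≠ 0 := fun h ↦ by simpa using congrArg (Polynomial.eval 0) h
  rw [hprod, hprod, mul_left_comm, mul_left_comm Q] at h
  have heval := congrArg (Polynomial.eval 1) (mul_left_cancel₀ (pow_ne_zero _ hX) h)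
  simpa [Polynomial.eval_prod, Polynomial.eval_finsetSum] using heval

variable {K A : Type*} [Field K] [CommRing A] [Algebra K A] (𝒜 : ℕ → Submodule K A)

/-- The degree `d` part of the graded quotient `A ⧸ I`, as the image of the degree `d` part of
`A`. -/
def quotientPiece (I : Ideal A) (d : ℕ) : Submodule K (A ⧸ I) :=
  (𝒜 d).map (Ideal.Quotient.mkₐ K I).toLinearMap

/-- The Hilbert series of the graded quotient `A ⧸ I`, with integer coefficients so that it can be
multiplied by `1 - X ^ d`. -/
noncomputable def hilbertSeries (I : Ideal A) : ℤ⟦X⟧ :=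
  .mk fun d ↦ (finrank K (quotientPiece 𝒜 I d) : ℤ)

variable {𝒜} {I : Ideal A}

lemma map_factor_quotientPiece {J : Ideal A} (h : I ≤ J) (d : ℕ) :
    (quotientPiece 𝒜 I d).map (Ideal.Quotient.factorₐ K h).toLinearMap = quotientPiece 𝒜 J d := by
  rw [quotientPiece, ← Submodule.map_comp]
  rfl

variable [GradedAlgebra 𝒜]

lemma iSupIndep_quotientPiece (hI : I.IsHomogeneous 𝒜) : iSupIndep (quotientPiece 𝒜 I) := by
  rw [iSupIndep_iff_finsetSum_eq_zero_imp_eq_zero]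
  intro s w hw hsum i hi
  choose! g hg hgw using hw
  have hmem : ∑ j ∈ s, g j ∈ I := by
    rw [← Ideal.Quotient.eq_zero_iff_mem, map_sum, ← hsum]
    exact Finset.sum_congr rfl hgw
  have hcomp : GradedRing.proj 𝒜 i (∑ j ∈ s, g j) = g i := by
    rw [map_sum, Finset.sum_eq_single_of_mem i hi]
    · exact decompose_of_mem_same 𝒜 (hg i hi)
    · exact fun j hj hne ↦ decompose_of_mem_ne 𝒜 (hg j hj) hne
  rw [← hgw i hi]
  exact Ideal.Quotient.eq_zero_iff_mem.2 (hcomp ▸ hI i hmem)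

lemma iSup_quotientPiece : ⨆ d, quotientPiece 𝒜 I d = ⊤ := by
  unfold quotientPiece
  rw [← Submodule.map_iSup, (Decomposition.isInternal 𝒜).submodule_iSup_eq_top, Submodule.map_top,
    LinearMap.range_eq_top]
  exact Ideal.Quotient.mkₐ_surjective K I

lemma exists_coe_eq_hilbertSeries (hI : I.IsHomogeneous 𝒜) [FiniteDimensional K (A ⧸ I)] :
    ∃ Q : Polynomial ℤ, (Q : ℤ⟦X⟧) = hilbertSeries 𝒜 I ∧ Q.eval 1 = finrank K (A ⧸ I) := by
  have hind := iSupIndep_quotientPiece hI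
  set s := (WellFoundedGT.finite_ne_bot_of_iSupIndep hind).toFinset
  have hs {d : ℕ} (hd : d ∉ s) : quotientPiece 𝒜 I d = ⊥ := by simpa [s] using hd
  have htop : ⨆ d ∈ s, quotientPiece 𝒜 I d = ⊤ := by
    rw [← iSup_quotientPiece (𝒜 := 𝒜)]
    refine iSup_congr fun d ↦ ?_
    by_cases hd : d ∈ s
    · rw [iSup_pos hd]
    · rw [iSup_neg hd, hs hd]
  refine ⟨∑ d ∈ s, .monomial d (finrank K (quotientPiece 𝒜 I d) : ℤ), ?_, ?_⟩
  · ext d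
    simp only [Polynomial.coeff_coe, Polynomial.finsetSum_coeff, Polynomial.coeff_monomial,
      Finset.sum_ite_eq', hilbertSeries, PowerSeries.coeff_mk, ite_eq_left_iff]
    intro hd
    rw [hs hd, finrank_bot, Nat.cast_zero]
  · simp only [Polynomial.eval_finsetSum, Polynomial.eval_monomial, one_pow, mul_one]
    rw [← Nat.cast_sum, ← finrank_biSup_of_iSupIndep hind, htop, finrank_top]

variable {f : A} {D : ℕ}

lemma quotientPiece_inf_ker_factor (hI : I.IsHomogeneous 𝒜) (hf : f ∈ 𝒜 D) (d : ℕ) :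
    quotientPiece 𝒜 I d ⊓ (Ideal.Quotient.factorₐ K
        (le_sup_left : I ≤ I ⊔ Ideal.span {f})).toLinearMap.ker =
      if D ≤ d then
        (quotientPiece 𝒜 I (d - D)).map (LinearMap.mulLeft K (Ideal.Quotient.mk I f))
      else ⊥ := by
  refine le_antisymm ?_ ?_
  · rintro _ ⟨⟨a, ha, rfl⟩, hker⟩
    have haf : a ∈ I ⊔ Ideal.span {f} := Ideal.Quotient.eq_zero_iff_mem.1 hker
    obtain ⟨i, hi, _, hwf, rfl⟩ := Submodule.mem_sup.1 haf
    obtain ⟨w, rfl⟩ := Ideal.mem_span_singleton.1 hwf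
    have hcomp : i + f * w - (decompose 𝒜 (f * w) d : A) = decompose 𝒜 i d := by
      rw [sub_eq_iff_eq_add, ← decompose_of_mem_same 𝒜 ha, decompose_add]
      rfl
    have hmk : Ideal.Quotient.mk I (i + f * w) = Ideal.Quotient.mk I (decompose 𝒜 (f * w) d) :=
      Ideal.Quotient.eq.2 (hcomp ▸ hI d hi)
    rw [coe_decompose_mul_of_left_mem 𝒜 d hf] at hmk
    split_ifs at hmk ⊢ with hD
    · exact ⟨_, ⟨_, SetLike.coe_mem _, rfl⟩, by simpa using hmk.symm⟩
    · simpa using hmk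
  · split_ifs with hD
    · rintro _ ⟨_, ⟨u, hu, rfl⟩, rfl⟩
      refine ⟨⟨f * u, ?_, map_mul (Ideal.Quotient.mk I) f u⟩, Ideal.Quotient.eq_zero_iff_mem.2 ?_⟩
      · exact Nat.add_sub_cancel' hD ▸ SetLike.mul_mem_graded hf hu
      · exact Ideal.mem_sup_right (Ideal.mul_mem_right u _ (Ideal.mem_span_singleton_self f))
    · exact bot_le

lemma hilbertSeries_sup_span_singleton [∀ d, FiniteDimensional K (𝒜 d)]
    (hI : I.IsHomogeneous 𝒜) (hf : f ∈ 𝒜 D) (hreg : ∀ u, f * u ∈ I → u ∈ I) :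
    hilbertSeries 𝒜 (I ⊔ Ideal.span {f}) = hilbertSeries 𝒜 I * (1 - PowerSeries.X ^ D) := by
  have hinj : Function.Injective (LinearMap.mulLeft K (Ideal.Quotient.mk I f)) := by
    refine (injective_iff_map_eq_zero _).2 fun x hx ↦ ?_
    obtain ⟨u, rfl⟩ := Ideal.Quotient.mk_surjective x
    exact Ideal.Quotient.eq_zero_iff_mem.2 (hreg u (Ideal.Quotient.eq_zero_iff_mem.1 hx))
  rw [mul_sub, mul_one, eq_sub_iff_add_eq]
  ext d
  have : FiniteDimensional K (quotientPiece 𝒜 I d) := inferInstanceAs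
    (FiniteDimensional K ((𝒜 d).map (Ideal.Quotient.mkₐ K I).toLinearMap))
  have hrank := finrank_map_add_finrank_inf_ker
    (Ideal.Quotient.factorₐ K (le_sup_left : I ≤ I ⊔ Ideal.span {f})).toLinearMap
    (quotientPiece 𝒜 I d)
  rw [map_factor_quotientPiece, quotientPiece_inf_ker_factor hI hf] at hrank
  rw [map_add, PowerSeries.coeff_mul_X_pow']
  simp only [hilbertSeries, PowerSeries.coeff_mk]
  by_cases hD : D ≤ d
  · rw [if_pos hD, ← (Submodule.equivMapOfInjective _ hinj _).finrank_eq] at hrank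
    rw [if_pos hD, ← hrank, Nat.cast_add]
  · rw [if_neg hD, finrank_bot] at hrank
    rw [if_neg hD, ← hrank, add_zero, add_zero]

lemma hilbertSeries_ofList [∀ d, FiniteDimensional K (𝒜 d)] {ι : Type*} {p : ι → A} {D : ι → ℕ}
    (hp : ∀ i, p i ∈ 𝒜 (D i)) {l : List ι} (hreg : IsWeaklyRegular A (l.map p)) :
    hilbertSeries 𝒜 (Ideal.ofList (l.map p)) =
      hilbertSeries 𝒜 ⊥ * (l.map fun i ↦ 1 - PowerSeries.X ^ D i).prod := by
  induction l using List.reverseRecOn with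
  | nil => simp
  | append_singleton l i ih =>
    rw [List.map_append, isWeaklyRegular_append_iff, List.map_singleton,
      isWeaklyRegular_singleton_iff, isSMulRegular_quotient_iff_mem_of_smul_mem, smul_eq_mul,
      Ideal.mul_top] at hreg
    have hhom : (Ideal.ofList (l.map p)).IsHomogeneous 𝒜 :=
      Ideal.homogeneous_span 𝒜 _ (List.forall_mem_map.2 fun j _ ↦ ⟨D j, hp j⟩)
    simp only [List.map_append, List.map_singleton, Ideal.ofList_append, Ideal.ofList_singleton,
      List.prod_append, List.prod_singleton]
    rw [← mul_assoc, ← ih hreg.1]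
    exact hilbertSeries_sup_span_singleton hhom (hp i) hreg.2

theorem prod_mul_finrank_quotient_eq [∀ d, FiniteDimensional K (𝒜 d)] {ι : Type*} [Fintype ι]
    {p q : ι → A} {a b : ι → ℕ} (hp : ∀ i, p i ∈ 𝒜 (a i)) (hq : ∀ i, q i ∈ 𝒜 (b i))
    (hpreg : IsWeaklyRegular A ((Finset.univ : Finset ι).toList.map p))
    (hqreg : IsWeaklyRegular A ((Finset.univ : Finset ι).toList.map q))
    [FiniteDimensional K (A ⧸ Ideal.span (Set.range p))]
    [FiniteDimensional K (A ⧸ Ideal.span (Set.range q))] :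
    (∏ i, b i) * finrank K (A ⧸ Ideal.span (Set.range p)) =
      (∏ i, a i) * finrank K (A ⧸ Ideal.span (Set.range q)) := by
  have hhom {r : ι → A} {c : ι → ℕ} (hr : ∀ i, r i ∈ 𝒜 (c i)) :
      (Ideal.span (Set.range r)).IsHomogeneous 𝒜 :=
    Ideal.homogeneous_span 𝒜 _ (Set.forall_mem_range.2 fun i ↦ ⟨c i, hr i⟩)
  have hHp := hilbertSeries_ofList hp hpreg
  have hHq := hilbertSeries_ofList hq hqreg
  rw [ofList_map_univ_toList, Finset.prod_map_toList] at hHp hHq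
  obtain ⟨P, hP, hP1⟩ := exists_coe_eq_hilbertSeries (hhom hp)
  obtain ⟨Q, hQ, hQ1⟩ := exists_coe_eq_hilbertSeries (hhom hq)
  have hcoe (c : ι → ℕ) : ((∏ i, (1 - .X ^ c i) : Polynomial ℤ) : ℤ⟦X⟧) =
      ∏ i, (1 - PowerSeries.X ^ c i) := by
    rw [← Polynomial.coeToPowerSeries.ringHom_apply, map_prod]
    simp
  have hPQ : P * ∏ i, (1 - .X ^ b i) = Q * ∏ i, (1 - .X ^ a i) := by
    rw [← Polynomial.coe_inj, Polynomial.coe_mul, Polynomial.coe_mul, hcoe, hcoe, hP, hQ, hHp, hHq,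
      mul_right_comm]
  have heval := eval_one_mul_prod_of_mul_prod_one_sub_X_pow hPQ
  rw [hP1, hQ1] at heval
  rw [mul_comm, mul_comm (∏ i, a i)]
  exact_mod_cast heval

end HilbertSeries

section WeightedHomogeneous

open DirectSum RingTheory.Sequence

lemma isWeaklyRegular_map_X {R σ : Type*} [CommRing R] {l : List σ} (hl : l.Nodup) :
    IsWeaklyRegular (MvPolynomial σ R) (l.map (X (R := R))) := by
  have hspan (i : ℕ) : Ideal.ofList ((l.map (X (R := R))).take i) =
      Ideal.span (X '' {j | j ∈ l.take i}) := by
    rw [Ideal.ofList, ← List.map_take]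
    congr 1
    ext
    simp only [Set.mem_ofPred_eq, List.mem_map, Set.mem_image]
  rw [isWeaklyRegular_self_iff]
  intro i hi u hu
  rw [List.length_map] at hi
  rw [hspan, mem_ideal_span_X_image] at hu ⊢
  intro m hm
  rw [List.getElem_map, support_X_mul] at hu
  obtain ⟨j, hj, hjm⟩ := hu _ (Finset.mem_map_of_mem _ hm)
  have hne : l[i] ≠ j := by
    rintro rfl
    grind [List.mem_take_iff_getElem, List.Nodup.getElem_inj_iff]
  refine ⟨j, hj, ?_⟩
  simpa [hne] using hjm

variable {K σ : Type*} [Field K]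

attribute [local instance] weightedGradedAlgebra

lemma isUnit_decompose_zero_of_notMem_ker_constantCoeff {v : σ → ℕ} (hv : ∀ i, 0 < v i)
    {s : MvPolynomial σ K} (hs : s ∉ RingHom.ker (constantCoeff (R := K) (σ := σ))) :
    IsUnit (decompose (weightedHomogeneousSubmodule K v) s 0 : MvPolynomial σ K) := by
  have h : (decompose (weightedHomogeneousSubmodule K v) s 0 : MvPolynomial σ K) =
      C (coeff 0 s) :=
    (decompose'_apply K v s 0).trans (weightedHomogeneousComponent_zero s fun i ↦ (hv i).ne')
  rw [h]
  exact (IsUnit.mk0 _ hs).map C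

theorem isWeaklyRegular_of_isWeightedHomogeneous [Finite σ] {v : σ → ℕ} (hv : ∀ i, 0 < v i)
    {l : List (MvPolynomial σ K)} (hlen : l.length = Nat.card σ)
    (hl : ∀ f ∈ l, ∃ d, 0 < d ∧ IsWeightedHomogeneous v f d)
    [FiniteDimensional K (MvPolynomial σ K ⧸ Ideal.ofList l)] :
    IsWeaklyRegular (MvPolynomial σ K) l := by
  have := Fintype.ofFinite σ
  have : IsArtinianRing (MvPolynomial σ K ⧸ Ideal.ofList l) := .of_finite K _
  have : (RingHom.ker (constantCoeff (R := K) (σ := σ))).IsPrime := RingHom.ker_isPrime _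
  refine isWeaklyRegular_of_isArtinianRing_quotient (weightedHomogeneousSubmodule K v)
    (P := RingHom.ker (constantCoeff (R := K) (σ := σ)))
    (fun _ ↦ isUnit_decompose_zero_of_notMem_ker_constantCoeff hv)
    (rs := (Finset.univ : Finset σ).toList.map X) ?_ ?_
    (isWeaklyRegular_map_X (Finset.nodup_toList _)) ?_ ?_
  · simp [hlen]
  · exact List.forall_mem_map.2 fun i _ ↦ constantCoeff_X K i
  · intro f hf
    obtain ⟨d, hd, hfd⟩ := hl f hf
    exact hfd.coeff_eq_zero 0 (by simpa using hd.ne)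
  · exact fun f hf ↦ (hl f hf).imp fun d hd ↦ hd.2

lemma span_range_X_eq_ker_aeval_zero :
    Ideal.span (Set.range (X (R := K) (σ := σ))) = RingHom.ker (aeval (0 : σ → K)) := by
  ext f
  have hcoeff : f ∈ RingHom.ker (aeval (0 : σ → K)) ↔ 0 ∉ f.support := by
    simp [constantCoeff_eq]
  rw [hcoeff, ← Set.image_univ, mem_ideal_span_X_image]
  refine ⟨fun h h0 ↦ ?_, fun h m hm ↦ ?_⟩
  · obtain ⟨i, -, hi⟩ := h 0 h0
    exact hi rfl
  · obtain ⟨i, hi⟩ := Finsupp.ne_iff.1 (ne_of_mem_of_not_mem hm h)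
    exact ⟨i, Set.mem_univ i, hi⟩

lemma finrank_quotient_span_range_X :
    Module.finrank K (MvPolynomial σ K ⧸ Ideal.span (Set.range (X (R := K) (σ := σ)))) = 1 := by
  have hsurj : Function.Surjective (aeval (R := K) (0 : σ → K)) := fun c ↦ ⟨C c, aeval_C _ c⟩
  rw [span_range_X_eq_ker_aeval_zero,
    (Ideal.quotientKerAlgEquivOfSurjective hsurj).toLinearEquiv.finrank_eq, Module.finrank_self]

theorem stmt11_general [Fintype σ] (v : σ → ℕ) (hv : ∀ i, 0 < v i)
    (p : σ → MvPolynomial σ K) (D : σ → ℕ) (hD : ∀ i, 0 < D i)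
    (hp : ∀ i, (p i).IsWeightedHomogeneous v (D i))
    (hfin : FiniteDimensional K (MvPolynomial σ K ⧸ Ideal.span (Set.range p))) :
    (∏ i, v i) * Module.finrank K (MvPolynomial σ K ⧸ Ideal.span (Set.range p)) =
      ∏ i, D i := by
  have hpiece (d : ℕ) : FiniteDimensional K (weightedHomogeneousSubmodule K v d) :=
    Module.Finite.iff_fg.2 (weightedHomogeneousSubmodule_fg K v (fun i ↦ (hv i).ne') d)
  have hreg : IsWeaklyRegular (MvPolynomial σ K) ((Finset.univ : Finset σ).toList.map p) := by
    rw [← ofList_map_univ_toList] at hfin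
    exact isWeaklyRegular_of_isWeightedHomogeneous hv (by simp)
      (List.forall_mem_map.2 fun i _ ↦ ⟨D i, hD i, hp i⟩)
  have hXfin := Module.finite_of_finrank_eq_succ (finrank_quotient_span_range_X (K := K) (σ := σ))
  rw [prod_mul_finrank_quotient_eq (𝒜 := weightedHomogeneousSubmodule K v) hp
    (isWeightedHomogeneous_X K v) hreg (isWeaklyRegular_map_X (Finset.nodup_toList _)),
    finrank_quotient_span_range_X, mul_one]

end WeightedHomogeneous

/-- Bezout's theorem for weighted homogeneous complete intersections. -/
theorem stmt11 (N : ℕ) (hN : 1 ≤ N) (v : Fin N → ℕ) (hv : ∀ i, 0 < v i)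
    (p : Fin N → MvPolynomial (Fin N) ℂ) (D : Fin N → ℕ) (hD : ∀ i, 0 < D i)
    (hp : ∀ i, (p i).IsWeightedHomogeneous v (D i))
    (hfin : FiniteDimensional ℂ
      (MvPolynomial (Fin N) ℂ ⧸ Ideal.span (Set.range p))) :
    (∏ i, v i) *
        Module.finrank ℂ (MvPolynomial (Fin N) ℂ ⧸ Ideal.span (Set.range p)) =
      ∏ i, D i := by
  exact stmt11_general v hv p D hD hp hfin
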